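/- Let q be an odd prime power and k a positive integer. For every ε > 0 there exists N = N(ε) such that for all n ≥ N, the proportion of μ ∈ 𝔛_n with v_2(d_μ) < v_2((n)_k) is less than ε: #{μ ∈ 𝔛_n : v_2(d_μ) < v_2((n)_k)} / |𝔛_n| < ε, where (n)_k = n!/(n−k)! is the falling factorial. -/

import Mathlib

/-- The `i`-th part (0-indexed, parts in weakly decreasing order) of the partition whose
multiset of parts is `lam`; `0` if `i` is at least the number of parts. -/
def partNth (lam : Multiset ℕ) (i : ℕ) : ℕ :=
  ((lam.sort (· ≤ ·)).reverse.getD i 0)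

/-- The `j`-th part (0-indexed) of the conjugate partition: the number of parts `> j`. -/
def conjNth (lam : Multiset ℕ) (j : ℕ) : ℕ :=
  (lam.filter (fun m => j < m)).card

/-- The cells `(i, j)` (0-indexed) of the Young diagram of `lam`. -/
def cellsOf (lam : Multiset ℕ) : Finset (ℕ × ℕ) :=
  (Finset.range (Multiset.card lam) ×ˢ Finset.range lam.sum).filter
    (fun c => c.2 < partNth lam c.1)

/-- The hook length of the cell `c = (i, j)` of `lam`:
`(λᵢ − j) + (λ'ⱼ − i) − 1`. -/
def hookLen (lam : Multiset ℕ) (c : ℕ × ℕ) : ℕ :=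
  (partNth lam c.1 - c.2) + (conjNth lam c.2 - c.1) - 1

/-- The product of all hook lengths of `lam`. -/
def hookProd (lam : Multiset ℕ) : ℕ :=
  ∏ c ∈ cellsOf lam, hookLen lam c

/-- `α(λ) = Σᵢ (i − 1)·λᵢ` (1-indexed), i.e. `Σᵢ i·λᵢ` for the 0-indexed parts. -/
def alphaStat (lam : Multiset ℕ) : ℕ :=
  ∑ i ∈ Finset.range (Multiset.card lam), i * partNth lam i

/-- `𝔣_λ = n! / ∏_{h ∈ H(λ)} |h|`, the degree of the irreducible character of `S_n`
indexed by `λ`, as a rational number. -/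
def fDeg (lam : Multiset ℕ) : ℚ :=
  (Nat.factorial lam.sum : ℚ) / (hookProd lam : ℚ)

/-- `d_λ(x) = x^{α(λ)} · ∏_{i=1}^{n} (x^i − 1) / ∏_{h ∈ H(λ)} (x^{|h|} − 1)`. -/
def dDeg (lam : Multiset ℕ) (x : ℕ) : ℚ :=
  (x : ℚ) ^ alphaStat lam * (∏ i ∈ Finset.Icc 1 lam.sum, ((x : ℚ) ^ i - 1)) /
    ∏ c ∈ cellsOf lam, ((x : ℚ) ^ hookLen lam c - 1)
/-- `μ` is a member of `𝔛_n`: a finitely supported assignment of a partition (given by its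
multiset of positive parts) to each monic irreducible polynomial `f ≠ x` over `F`, such that
`Σ_f |μ(f)|·deg f = n`. -/
def IsXn (F : Type*) [Field F] (n : ℕ) (μ : Polynomial F →₀ Multiset ℕ) : Prop :=
  (∀ f ∈ μ.support, f.Monic ∧ Irreducible f ∧ f ≠ Polynomial.X) ∧
  (∀ f : Polynomial F, ∀ m ∈ μ f, 0 < m) ∧
  (μ.sum fun f lam => lam.sum * f.natDegree) = n

/-- `a_μ = ∏_{i=1}^{n} (q^i − 1) / ∏_{f ∈ Φ} ∏_{i=1}^{|μ(f)|} (q^{d(f)·i} − 1)`. -/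
noncomputable def aMu (q : ℕ) {F : Type*} [Field F] (n : ℕ)
    (μ : Polynomial F →₀ Multiset ℕ) : ℚ :=
  (∏ i ∈ Finset.Icc 1 n, ((q : ℚ) ^ i - 1)) /
    ∏ f ∈ μ.support, ∏ i ∈ Finset.Icc 1 (μ f).sum, ((q : ℚ) ^ (f.natDegree * i) - 1)

/-- `ψ_m(x) = ∏_{i=1}^{m} (x^i − 1)`. -/
def psiPoly (m : ℕ) (x : ℚ) : ℚ := ∏ i ∈ Finset.Icc 1 m, (x ^ i - 1)

/-- `H(λ, x) = x^{α(λ)} / ∏_{h ∈ H(λ)} (x^{|h|} − 1)`. -/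
def hFactor (lam : Multiset ℕ) (x : ℚ) : ℚ :=
  x ^ alphaStat lam / ∏ c ∈ cellsOf lam, (x ^ hookLen lam c - 1)

/-- `d_μ = ψ_n(q) · ∏_{f ∈ Φ} H(μ(f), q^{d(f)})`, the degree of the irreducible character of
`GL(n, q)` indexed by `μ`, as a rational number. -/
noncomputable def dMu (q : ℕ) {F : Type*} [Field F] (n : ℕ)
    (μ : Polynomial F →₀ Multiset ℕ) : ℚ :=
  psiPoly n (q : ℚ) * ∏ f ∈ μ.support, hFactor (μ f) ((q : ℚ) ^ f.natDegree)


namespace TwoAdic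

lemma partNth_le_sum (lam : Multiset ℕ) (i : ℕ) : partNth lam i ≤ lam.sum := by
  unfold partNth
  set L := (lam.sort (· ≤ ·)).reverse with hL
  have hs : L.sum = lam.sum := by
    rw [hL, List.sum_reverse, ← Multiset.sum_coe, Multiset.sort_eq]
  rw [← hs]
  by_cases h : i < L.length
  · rw [List.getD_eq_getElem _ _ h]
    exact List.single_le_sum (by simp) _ (List.getElem_mem h)
  · rw [List.getD_eq_default _ _ (by omega)]; simp

lemma card_le_sum (lam : Multiset ℕ) (hpos : ∀ m ∈ lam, 0 < m) : lam.card ≤ lam.sum := by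
  have := Multiset.card_nsmul_le_sum (s := lam) (a := 1) (fun x hx => hpos x hx)
  simpa using this

lemma conjNth_le (lam : Multiset ℕ) (hpos : ∀ m ∈ lam, 0 < m) (j : ℕ) :
    conjNth lam j ≤ lam.sum :=
  (Multiset.card_le_card (Multiset.filter_le _ _)).trans (card_le_sum lam hpos)

lemma hookLen_le (lam : Multiset ℕ) (hpos : ∀ m ∈ lam, 0 < m) (c : ℕ × ℕ) :
    hookLen lam c ≤ 2 * lam.sum := by
  unfold hookLen
  have h1 := partNth_le_sum lam c.1
  have h2 := conjNth_le lam hpos c.2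
  omega

lemma lt_conjNth (lam : Multiset ℕ) (i j : ℕ) (h : j < partNth lam i) : i < conjNth lam j := by
  unfold partNth at h
  unfold conjNth
  set L := (lam.sort (· ≤ ·)).reverse with hL
  have hs : (L : Multiset ℕ) = lam := by
    rw [hL, Multiset.coe_reverse, Multiset.sort_eq]
  have hi : i < L.length := by
    by_contra hi
    rw [List.getD_eq_default _ _ (by omega)] at h
    omega
  rw [List.getD_eq_getElem _ _ hi] at h
  have hsort : L.Pairwise (· ≥ ·) := by
    rw [hL, List.pairwise_reverse]
    exact Multiset.pairwise_sort lam (· ≤ ·)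
  rw [← hs, Multiset.filter_coe, Multiset.coe_card]
  have hsub : (L.take (i+1)).Sublist L := List.take_sublist _ _
  have hf := hsub.filter (fun b => decide (j < b))
  have hlen := hf.length_le
  have : (L.take (i+1)).filter (fun b => decide (j < b)) = L.take (i+1) := by
    rw [List.filter_eq_self]
    intro a ha
    rw [List.mem_take_iff_getElem] at ha
    obtain ⟨k, hk, rfl⟩ := ha
    have hk' : k ≤ i := by omega
    have : L[i] ≤ L[k] := by
      rcases hk'.eq_or_lt with rfl | hlt
      · exact le_rfl
      · exact List.pairwise_iff_getElem.1 hsort k i _ _ hlt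
    simpa using lt_of_lt_of_le h this
  rw [this, List.length_take] at hlen
  omega

lemma hookLen_pos (lam : Multiset ℕ) (c : ℕ × ℕ) (hc : c ∈ cellsOf lam) :
    0 < hookLen lam c := by
  have h : c.2 < partNth lam c.1 := (Finset.mem_filter.1 hc).2
  have := lt_conjNth lam _ _ h
  unfold hookLen
  omega

lemma card_cells (lam : Multiset ℕ) : (cellsOf lam).card ≤ lam.sum := by
  unfold cellsOf
  rw [Finset.card_filter, Finset.sum_product]
  have h1 : ∀ i ∈ Finset.range (Multiset.card lam),
      ∑ j ∈ Finset.range lam.sum, (if j < partNth lam i then 1 else 0) ≤ partNth lam i := by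
    intro i _
    rw [← Finset.card_filter]
    calc _ ≤ (Finset.range (partNth lam i)).card := by
          apply Finset.card_le_card
          intro x hx
          simpa using (Finset.mem_filter.1 hx).2
      _ = _ := by simp
  refine (Finset.sum_le_sum h1).trans ?_
  unfold partNth
  set L := (lam.sort (· ≤ ·)).reverse with hL
  have hs : (L : Multiset ℕ) = lam := by
    rw [hL, Multiset.coe_reverse, Multiset.sort_eq]
  have hc : lam.card = L.length := by rw [← hs]; simp
  have hsum : lam.sum = L.sum := by rw [← hs]; simp
  rw [hc, hsum, Finset.sum_range]
  apply le_of_eq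
  rw [← Fin.sum_univ_getElem L]
  refine Finset.sum_congr rfl fun i _ => ?_
  rw [List.getD_eq_getElem _ _ i.2]

lemma val_prod {ι : Type*} (s : Finset ι) (g : ι → ℚ) (h : ∀ i ∈ s, g i ≠ 0) :
    padicValRat 2 (∏ i ∈ s, g i) = ∑ i ∈ s, padicValRat 2 (g i) := by
  classical
  induction s using Finset.induction_on with
  | empty => simp
  | insert a s ha ih =>
    rw [Finset.prod_insert ha, Finset.sum_insert ha, padicValRat.mul, ih]
    · exact fun i hi => h i (Finset.mem_insert_of_mem hi)
    · exact h a (Finset.mem_insert_self _ _)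
    · exact Finset.prod_ne_zero_iff.2 fun i hi => h i (Finset.mem_insert_of_mem hi)

lemma cast_pow_sub (q m : ℕ) (hq : 3 ≤ q) : ((q:ℚ) ^ m - 1) = ((q ^ m - 1 : ℕ) : ℚ) := by
  have : 1 ≤ q ^ m := Nat.one_le_pow _ _ (by omega)
  push_cast [this]; rfl

lemma pow_sub_ne (q m : ℕ) (hq : 3 ≤ q) (hm : 0 < m) : q ^ m - 1 ≠ 0 := by
  have : 1 < q ^ m := Nat.one_lt_pow (by omega) (by omega)
  omega

lemma pow_sub_ne' (q m : ℕ) (hq : 3 ≤ q) (hm : 0 < m) : (q:ℚ) ^ m - 1 ≠ 0 := by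
  rw [cast_pow_sub q m hq]
  exact_mod_cast pow_sub_ne q m hq hm

lemma val_le (q m : ℕ) (hq : 3 ≤ q) (hodd : Odd q) (hm : 0 < m) :
    padicValRat 2 ((q:ℚ) ^ m - 1) ≤
      ((padicValNat 2 (q + 1) + padicValNat 2 (q - 1) + Nat.log 2 m : ℕ) : ℤ) := by
  rw [cast_pow_sub q m hq, padicValRat.of_nat]
  norm_cast
  have h1 : padicValNat 2 (q ^ m - 1) ≤ padicValNat 2 (q ^ (2*m) - 1) := by
    rw [← padicValNat_dvd_iff_le (pow_sub_ne q (2*m) hq (by omega))]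
    refine pow_padicValNat_dvd.trans ?_
    have := Nat.sub_dvd_pow_sub_pow (q^m) 1 2
    rw [← pow_mul, one_pow, mul_comm] at this
    exact this
  have h2 := padicValNat.pow_two_sub_pow (x := q) (y := 1) (n := 2*m) (by omega)
    (by obtain ⟨a, rfl⟩ := hodd; exact ⟨a, by omega⟩)
    (by obtain ⟨a, rfl⟩ := hodd; omega) (by omega) (by simp)
  rw [one_pow, padicValNat.mul (by omega) (by omega), padicValNat.self (by omega)] at h2
  have h3 := padicValNat_le_nat_log (p := 2) m
  omega

lemma one_le_val (q m : ℕ) (hq : 3 ≤ q) (hodd : Odd q) (hm : 0 < m) :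
    1 ≤ padicValRat 2 ((q:ℚ) ^ m - 1) := by
  rw [cast_pow_sub q m hq, padicValRat.of_nat]
  norm_cast
  refine one_le_padicValNat_of_dvd (pow_sub_ne q m hq hm) ?_
  have := hodd.pow (n := m)
  obtain ⟨a, ha⟩ := this
  rw [ha]; exact ⟨a, by omega⟩

/-- total number of boxes -/
def boxes {F : Type*} [Field F] (μ : Polynomial F →₀ Multiset ℕ) : ℕ :=
  ∑ f ∈ μ.support, (μ f).sum

lemma val_dMu {F : Type*} [Field F] (q n : ℕ) (hq : 3 ≤ q) (hodd : Odd q)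
    (μ : Polynomial F →₀ Multiset ℕ) (hμ : IsXn F n μ) :
    (n : ℤ) - boxes μ * (padicValNat 2 (q + 1) + padicValNat 2 (q - 1) + Nat.log 2 (2*n) : ℕ)
      ≤ padicValRat 2 (dMu q n μ) := by
  obtain ⟨h1, h2, h3⟩ := hμ
  set L := (padicValNat 2 (q + 1) + padicValNat 2 (q - 1) + Nat.log 2 (2*n) : ℕ) with hL
  have hq0 : (q:ℚ) ≠ 0 := by exact_mod_cast (by omega : q ≠ 0)
  have hvq : padicValRat 2 (q:ℚ) = 0 := by
    rw [padicValRat.of_nat, padicValNat.eq_zero_of_not_dvd]; rfl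
    obtain ⟨a, rfl⟩ := hodd; omega
  have hpsi0 : psiPoly n (q:ℚ) ≠ 0 := by
    refine Finset.prod_ne_zero_iff.2 fun i hi => pow_sub_ne' q i hq ?_
    exact (Finset.mem_Icc.1 hi).1
  have hpsi : (n:ℤ) ≤ padicValRat 2 (psiPoly n (q:ℚ)) := by
    unfold psiPoly
    rw [val_prod]
    · calc (n:ℤ) = ∑ i ∈ Finset.Icc 1 n, (1:ℤ) := by simp
        _ ≤ _ := Finset.sum_le_sum fun i hi => one_le_val q i hq hodd (Finset.mem_Icc.1 hi).1
    · exact fun i hi => pow_sub_ne' q i hq (Finset.mem_Icc.1 hi).1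
  have hdeg : ∀ f ∈ μ.support, 0 < f.natDegree := fun f hf => (h1 f hf).2.1.natDegree_pos
  have hle : ∀ f ∈ μ.support, (μ f).sum * f.natDegree ≤ n := by
    intro f hf
    rw [← h3]
    exact Finset.single_le_sum (f := fun f => (μ f).sum * f.natDegree) (fun _ _ => Nat.zero_le _) hf
  have hc0 : ∀ f ∈ μ.support, ∀ c ∈ cellsOf (μ f),
      ((q:ℚ)^f.natDegree) ^ hookLen (μ f) c - 1 ≠ 0 := by
    intro f hf c hc
    rw [← pow_mul]
    exact pow_sub_ne' q _ hq (Nat.mul_pos (hdeg f hf) (hookLen_pos _ _ hc))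
  have hp0 : ∀ f ∈ μ.support, ∏ c ∈ cellsOf (μ f),
      (((q:ℚ)^f.natDegree) ^ hookLen (μ f) c - 1) ≠ 0 := fun f hf =>
    Finset.prod_ne_zero_iff.2 (hc0 f hf)
  have hx0 : ∀ f : Polynomial F, ((q:ℚ)^f.natDegree) ^ alphaStat (μ f) ≠ 0 := fun f =>
    pow_ne_zero _ (pow_ne_zero _ hq0)
  have hh0 : ∀ f ∈ μ.support, hFactor (μ f) ((q : ℚ) ^ f.natDegree) ≠ 0 := fun f hf =>
    div_ne_zero (hx0 f) (hp0 f hf)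
  have hhv : ∀ f ∈ μ.support, -(((μ f).sum : ℤ) * L) ≤
      padicValRat 2 (hFactor (μ f) ((q : ℚ) ^ f.natDegree)) := by
    intro f hf
    unfold hFactor
    rw [padicValRat.div (hx0 f) (hp0 f hf), padicValRat.pow, padicValRat.pow, hvq,
      val_prod _ _ (hc0 f hf)]
    have : ∑ c ∈ cellsOf (μ f), padicValRat 2 (((q:ℚ)^f.natDegree) ^ hookLen (μ f) c - 1)
        ≤ ((μ f).sum : ℤ) * L := by
      calc _ ≤ ∑ c ∈ cellsOf (μ f), (L : ℤ) := by
            refine Finset.sum_le_sum fun c hc => ?_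
            rw [← pow_mul]
            refine (val_le q _ hq hodd
              (Nat.mul_pos (hdeg f hf) (hookLen_pos _ _ hc))).trans ?_
            rw [hL]
            norm_cast
            refine Nat.add_le_add_left (Nat.log_mono_right ?_) _
            · have := hookLen_le (μ f) (h2 f) c
              calc f.natDegree * hookLen (μ f) c ≤ f.natDegree * (2 * (μ f).sum) := by gcongr
                _ = 2 * ((μ f).sum * f.natDegree) := by ring
                _ ≤ 2 * n := by have := hle f hf; omega
        _ = (cellsOf (μ f)).card * (L:ℤ) := by simp
        _ ≤ _ := by
            have := card_cells (μ f)
            gcongr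
    linarith
  unfold dMu
  rw [padicValRat.mul hpsi0 (Finset.prod_ne_zero_iff.2 hh0), val_prod _ _ hh0]
  have := Finset.sum_le_sum hhv
  have h5 : (boxes μ : ℤ) * L = ∑ f ∈ μ.support, ((μ f).sum : ℤ) * L := by
    unfold boxes
    push_cast
    rw [Finset.sum_mul]
  rw [Finset.sum_neg_distrib, ← h5] at this
  linarith

section inj
open Polynomial UniqueFactorizationMonoid
open scoped Classical

variable {F : Type*} [Field F]

noncomputable def ofFac (s : Multiset F[X]) : F[X] →₀ Multiset ℕ :=
  (Multiset.toFinsupp s).mapRange (fun c => Multiset.replicate c 1) (by simp)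

noncomputable def base (μ : F[X] →₀ Multiset ℕ) : F[X] →₀ Multiset ℕ :=
  μ.mapRange (fun l => l.filter (· ≠ 1)) (by simp)

noncomputable def fac (μ : F[X] →₀ Multiset ℕ) : Multiset F[X] :=
  Finsupp.toMultiset (μ.mapRange (fun l => l.count 1) (by simp))

lemma ofFac_apply (s : Multiset F[X]) (f : F[X]) :
    ofFac s f = Multiset.replicate (s.count f) 1 := rfl

lemma base_apply (μ : F[X] →₀ Multiset ℕ) (f : F[X]) :
    base μ f = (μ f).filter (· ≠ 1) := rfl

noncomputable def wt (μ : F[X] →₀ Multiset ℕ) : ℕ :=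
  μ.sum fun f lam => lam.sum * f.natDegree

lemma wt_add (μ ν : F[X] →₀ Multiset ℕ) : wt (μ + ν) = wt μ + wt ν := by
  unfold wt
  rw [Finsupp.sum_add_index']
  · simp
  · intro a b c; simp [add_mul]

lemma count_fac (μ : F[X] →₀ Multiset ℕ) (f : F[X]) : (fac μ).count f = (μ f).count 1 := by
  unfold fac; rw [Finsupp.count_toMultiset]; simp

lemma base_add_ofFac (μ : F[X] →₀ Multiset ℕ) : base μ + ofFac (fac μ) = μ := by
  ext f : 1
  rw [Finsupp.add_apply, base_apply, ofFac_apply, count_fac]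
  rw [← Multiset.filter_eq', add_comm]
  exact Multiset.filter_add_not _ _

lemma fac_base_add (μ : F[X] →₀ Multiset ℕ) (s : Multiset F[X]) :
    fac (base μ + ofFac s) = s := by
  ext f
  rw [count_fac]
  simp [base_apply, ofFac_apply]

lemma base_base_add (μ : F[X] →₀ Multiset ℕ) (s : Multiset F[X]) :
    base (base μ + ofFac s) = base μ := by
  ext f : 1
  simp [base_apply, ofFac_apply, Multiset.filter_eq_nil, Multiset.mem_replicate]

lemma ofFac_add (s t : Multiset F[X]) : ofFac (s + t) = ofFac s + ofFac t := by
  ext f : 1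
  simp [ofFac_apply, Multiset.replicate_add]

lemma wt_ofFac (s : Multiset F[X]) : wt (ofFac s) = (s.map natDegree).sum := by
  induction s using Multiset.induction_on with
  | empty =>
    have : ofFac (0 : Multiset F[X]) = 0 := by
      ext f : 1
      simp [ofFac_apply]
    rw [this]; simp [wt]
  | cons a s ih =>
    rw [← Multiset.singleton_add, ofFac_add, wt_add, ih]
    have : ofFac ({a} : Multiset F[X]) = Finsupp.single a {1} := by
      ext f : 1
      rw [ofFac_apply, Finsupp.single_apply, Multiset.count_singleton]
      by_cases h : f = a
      · simp [h]
      · simp [h, Ne.symm h]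
    rw [this]
    simp [wt]

def Good (f : F[X]) : Prop := f.Monic ∧ Irreducible f ∧ f ≠ X

lemma isXn_iff (n : ℕ) (μ : F[X] →₀ Multiset ℕ) :
    IsXn F n μ ↔ (∀ f, μ f ≠ 0 → Good f) ∧ (∀ f, ∀ m ∈ μ f, 0 < m) ∧ wt μ = n := by
  unfold IsXn Good wt
  simp only [Finsupp.mem_support_iff]

lemma fac_good {μ : F[X] →₀ Multiset ℕ} (h : ∀ f, μ f ≠ 0 → Good f) : ∀ f ∈ fac μ, Good f := by
  intro f hf
  apply h
  intro h0
  rw [← Multiset.count_pos, count_fac, h0] at hf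
  simp at hf

lemma prod_fac_monic {s : Multiset F[X]} (h : ∀ f ∈ s, Good f) : s.prod.Monic := by
  have := monic_multiset_prod_of_monic s id (fun f hf => (h f hf).1)
  simpa using this

lemma natDegree_prod_fac {s : Multiset F[X]} (h : ∀ f ∈ s, Good f) :
    s.prod.natDegree = (s.map natDegree).sum :=
  natDegree_multiset_prod_of_monic s (fun f hf => (h f hf).1)

lemma normalizedFactors_prod_fac {s : Multiset F[X]} (h : ∀ f ∈ s, Good f) :
    normalizedFactors s.prod = s := by
  rw [normalizedFactors_prod_eq s (fun f hf => (h f hf).2.1)]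
  conv_rhs => rw [← Multiset.map_id s]
  exact Multiset.map_congr rfl fun f hf => (h f hf).1.normalize_eq_self

lemma normalizedFactors_good {g : F[X]} (_hg : g.Monic) (h0 : g.coeff 0 ≠ 0) :
    ∀ f ∈ normalizedFactors g, Good f := by
  intro f hf
  have hirr := irreducible_of_normalized_factor f hf
  have hn := normalize_normalized_factor f hf
  refine ⟨?_, hirr, ?_⟩
  · rw [← hn]; exact monic_normalize hirr.ne_zero
  · rintro rfl
    exact h0 (X_dvd_iff.1 (dvd_of_mem_normalizedFactors hf))

lemma prod_normalizedFactors' {g : F[X]} (hg : g.Monic) : (normalizedFactors g).prod = g := by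
  rw [prod_normalizedFactors_eq hg.ne_zero, hg.normalize_eq_self]

/-- the new polynomial -/
noncomputable def newPoly (m : ℕ) (g p : F[X]) : F[X] := X ^ (m+1) * g + (X * p + 1)

lemma degree_low (m : ℕ) {p : F[X]} (hp : p.degree < m) : (X * p + 1 : F[X]).degree < (m+1 : ℕ) := by
  refine lt_of_le_of_lt (degree_add_le _ _) (max_lt ?_ ?_)
  · rw [degree_mul, degree_X, add_comm]
    by_cases h : p = 0
    · subst h; simp
    · rw [degree_eq_natDegree h] at hp ⊢
      norm_cast at hp ⊢
      omega
  · refine degree_one_le.trans_lt ?_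
    norm_cast
    omega

lemma newPoly_monic (m : ℕ) {g p : F[X]} (hg : g.Monic) (hp : p.degree < m) :
    (newPoly m g p).Monic ∧ (newPoly m g p).natDegree = g.natDegree + (m+1) := by
  have h1 : (X ^ (m+1) * g : F[X]).Monic := (monic_X_pow _).mul hg
  have hd : (X ^ (m+1) * g : F[X]).natDegree = g.natDegree + (m+1) := by
    rw [(monic_X_pow _).natDegree_mul hg, natDegree_X_pow, add_comm]
  have hlt : (X * p + 1 : F[X]).degree < (X ^ (m+1) * g : F[X]).degree := by
    refine (degree_low m hp).trans_le ?_
    rw [degree_eq_natDegree h1.ne_zero, hd]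
    norm_cast
    omega
  refine ⟨h1.add_of_left hlt, ?_⟩
  unfold newPoly
  rw [natDegree_add_eq_left_of_degree_lt hlt, hd]

lemma newPoly_coeff (m : ℕ) (g p : F[X]) : (newPoly m g p).coeff 0 = 1 := by
  simp [newPoly, coeff_zero_eq_eval_zero]

lemma newPoly_inj (m : ℕ) {g p g' p' : F[X]} (hp : p.degree < m) (hp' : p'.degree < m)
    (h : newPoly m g p = newPoly m g' p') : g = g' ∧ p = p' := by
  unfold newPoly at h
  have e1 := div_modByMonic_unique (f := X ^ (m+1) * g + (X * p + 1)) (g := X ^ (m+1)) g (X*p+1)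
    (monic_X_pow _) ⟨by ring, by rw [degree_X_pow]; exact degree_low m hp⟩
  have e2 := div_modByMonic_unique (f := X ^ (m+1) * g + (X * p + 1)) (g := X ^ (m+1)) g' (X*p'+1)
    (monic_X_pow _) ⟨by rw [h]; ring, by rw [degree_X_pow]; exact degree_low m hp'⟩
  refine ⟨e1.1.symm.trans e2.1, ?_⟩
  have := e1.2.symm.trans e2.2
  have := add_right_cancel this
  exact mul_left_cancel₀ X_ne_zero this

noncomputable def extend (m : ℕ) (μ : F[X] →₀ Multiset ℕ) (p : F[X]) : F[X] →₀ Multiset ℕ :=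
  base μ + ofFac (normalizedFactors (newPoly m (fac μ).prod p))

lemma extend_isXn (n m : ℕ) {μ : F[X] →₀ Multiset ℕ} (hμ : IsXn F n μ) {p : F[X]}
    (hp : p.degree < m) : IsXn F (n + (m+1)) (extend m μ p) := by
  rw [isXn_iff] at hμ ⊢
  obtain ⟨h1, h2, h3⟩ := hμ
  have hg := fac_good h1
  obtain ⟨hm, hd⟩ := newPoly_monic m (prod_fac_monic hg) hp
  have hgood := normalizedFactors_good hm (by rw [newPoly_coeff]; exact one_ne_zero)
  refine ⟨?_, ?_, ?_⟩
  · intro f hf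
    by_contra hb
    apply hf
    have e1 : μ f = 0 := by by_contra h; exact hb (h1 f h)
    have e2 : f ∉ normalizedFactors (newPoly m (fac μ).prod p) := fun h => hb (hgood f h)
    simp [extend, base_apply, ofFac_apply, e1, Multiset.count_eq_zero_of_notMem e2]
  · intro f k hk
    rw [extend, Finsupp.add_apply, base_apply, ofFac_apply, Multiset.mem_add,
      Multiset.mem_filter] at hk
    rcases hk with hk | hk
    · exact h2 f k hk.1
    · rw [Multiset.eq_of_mem_replicate hk]; exact one_pos
  · have e : wt μ = wt (base μ) + (fac μ).prod.natDegree := by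
      conv_lhs => rw [← base_add_ofFac μ, wt_add, wt_ofFac, ← natDegree_prod_fac hg]
    unfold extend
    rw [wt_add, wt_ofFac, ← natDegree_prod_fac hgood, prod_normalizedFactors' hm, hd]
    omega

lemma extend_inj (n m : ℕ) {μ ν : F[X] →₀ Multiset ℕ} (hμ : IsXn F n μ) (hν : IsXn F n ν)
    {p p' : F[X]} (hp : p.degree < m) (hp' : p'.degree < m) (h : extend m μ p = extend m ν p') :
    μ = ν ∧ p = p' := by
  rw [isXn_iff] at hμ hν
  have hg := fac_good hμ.1
  have hg' := fac_good hν.1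
  obtain ⟨hm, -⟩ := newPoly_monic m (prod_fac_monic hg) hp
  obtain ⟨hm', -⟩ := newPoly_monic m (prod_fac_monic hg') hp'
  have hb : base μ = base ν := by
    rw [← base_base_add μ (normalizedFactors (newPoly m (fac μ).prod p)),
      ← base_base_add ν (normalizedFactors (newPoly m (fac ν).prod p'))]
    exact congrArg base h
  have hf : normalizedFactors (newPoly m (fac μ).prod p) =
      normalizedFactors (newPoly m (fac ν).prod p') := by
    rw [← fac_base_add μ (normalizedFactors (newPoly m (fac μ).prod p)),
      ← fac_base_add ν (normalizedFactors (newPoly m (fac ν).prod p'))]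
    exact congrArg fac h
  have hP : newPoly m (fac μ).prod p = newPoly m (fac ν).prod p' := by
    rw [← prod_normalizedFactors' hm, hf, prod_normalizedFactors' hm']
  obtain ⟨h1, h2⟩ := newPoly_inj m hp hp' hP
  refine ⟨?_, h2⟩
  have h3 : fac μ = fac ν := by
    rw [← normalizedFactors_prod_fac hg, h1, normalizedFactors_prod_fac hg']
  rw [← base_add_ofFac μ, ← base_add_ofFac ν, hb, h3]

lemma card_degreeLT [Fintype F] (m : ℕ) : Nat.card (degreeLT F m) = Fintype.card F ^ m := by
  rw [Nat.card_congr (degreeLTEquiv F m).toEquiv]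
  simp [Nat.card_eq_fintype_card]

lemma card_extend [Fintype F] (n m : ℕ) (hfin : {μ | IsXn F (n + (m+1)) μ}.Finite) :
    {μ | IsXn F n μ}.Finite ∧
    {μ | IsXn F n μ}.ncard * Fintype.card F ^ m ≤ {μ | IsXn F (n + (m+1)) μ}.ncard := by
  let T : {μ | IsXn F n μ} × degreeLT F m → {μ | IsXn F (n + (m+1)) μ} :=
    fun x => ⟨extend m x.1.1 x.2.1, extend_isXn n m x.1.2 (mem_degreeLT.1 x.2.2)⟩
  have hT : Function.Injective T := by
    rintro ⟨⟨μ, hμ⟩, ⟨p, hp⟩⟩ ⟨⟨ν, hν⟩, ⟨p', hp'⟩⟩ h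
    obtain ⟨rfl, rfl⟩ := extend_inj n m hμ hν (mem_degreeLT.1 hp) (mem_degreeLT.1 hp')
      (congrArg Subtype.val h)
    rfl
  have : Finite {μ | IsXn F (n + (m+1)) μ} := hfin
  have hc := Nat.card_le_card_of_injective T hT
  rw [Nat.card_prod, card_degreeLT] at hc
  refine ⟨?_, hc⟩
  have hf2 := Finite.of_injective T hT
  exact Finite.prod_left (degreeLT F m)

/-- the key bound -/
lemma card_count_ge [Fintype F] (N i j : ℕ) (hi : 0 < i) (hj : 0 < j) (f : F[X])
    (hf : Irreducible f) (hfin : {μ | IsXn F N μ}.Finite) :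
    {μ | IsXn F N μ ∧ j ≤ (μ f).count i}.ncard * Fintype.card F ^ (i * j * f.natDegree) ≤
      Fintype.card F * {μ | IsXn F N μ}.ncard := by
  have hd := hf.natDegree_pos
  obtain ⟨m, hm⟩ : ∃ m, i * j * f.natDegree = m + 1 :=
    Nat.exists_eq_succ_of_ne_zero (by positivity)
  have key : ∀ μ, IsXn F N μ → j ≤ (μ f).count i → ∃ ν, μ = ν + Finsupp.single f
      (Multiset.replicate j i) ∧ wt ν + (m+1) = N ∧ IsXn F (N - (m+1)) ν := by
    intro μ hμ hc
    rw [isXn_iff] at hμ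
    obtain ⟨h1, h2, h3⟩ := hμ
    have hle : Multiset.replicate j i ≤ μ f := Multiset.le_count_iff_replicate_le.1 hc
    let ν : F[X] →₀ Multiset ℕ := μ.update f (μ f - Multiset.replicate j i)
    have hνf : ν f = μ f - Multiset.replicate j i := by simp [ν]
    have hνg : ∀ g, g ≠ f → ν g = μ g := by intro g hg; simp [ν, hg]
    have hνle : ∀ g, ν g ≤ μ g := by
      intro g
      by_cases hg : g = f
      · subst hg; rw [hνf]; exact tsub_le_self
      · rw [hνg g hg]
    have e : μ = ν + Finsupp.single f (Multiset.replicate j i) := by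
      ext g : 1
      by_cases hg : g = f
      · subst hg; rw [Finsupp.add_apply, hνf, Finsupp.single_eq_same, tsub_add_cancel_of_le hle]
      · rw [Finsupp.add_apply, hνg g hg, Finsupp.single_eq_of_ne hg, add_zero]
    have hw : wt ν + (m+1) = N := by
      rw [← h3]
      conv_rhs => rw [e, wt_add]
      rw [← hm]
      simp [wt, mul_comm i j]
    refine ⟨ν, e, hw, ?_⟩
    rw [isXn_iff]
    refine ⟨fun g hg => h1 g fun h0 => hg ?_, fun g k hk => h2 g k (Multiset.mem_of_le (hνle g) hk),
      by omega⟩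
    have := hνle g
    rw [h0] at this
    exact Multiset.le_zero.1 this
  by_cases hN : m + 1 ≤ N
  · obtain ⟨n, rfl⟩ : ∃ n, N = n + (m+1) := ⟨N - (m+1), by omega⟩
    obtain ⟨hfn, hcard⟩ := card_extend n m hfin
    have hsub : {μ | IsXn F (n+(m+1)) μ ∧ j ≤ (μ f).count i} ⊆
        (fun ν => ν + Finsupp.single f (Multiset.replicate j i)) '' {μ | IsXn F n μ} := by
      rintro μ ⟨hμ, hc⟩
      obtain ⟨ν, e, -, hν⟩ := key μ hμ hc
      refine ⟨ν, ?_, e.symm⟩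
      simpa using hν
    have h4 := (Set.ncard_le_ncard hsub (hfn.image _)).trans (Set.ncard_image_le hfn)
    rw [hm, pow_succ]
    calc _ ≤ {μ | IsXn F n μ}.ncard * (Fintype.card F ^ m * Fintype.card F) := by gcongr
      _ = Fintype.card F * ({μ | IsXn F n μ}.ncard * Fintype.card F ^ m) := by ring
      _ ≤ _ := by gcongr
  · have : {μ | IsXn F N μ ∧ j ≤ (μ f).count i} = ∅ := by
      ext μ
      simp only [Set.mem_ofPred_eq, Set.mem_empty_iff_false, iff_false]
      rintro ⟨hμ, hc⟩
      obtain ⟨ν, -, h, -⟩ := key μ hμ hc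
      omega
    rw [this]; simp

end inj

section expectation
open Polynomial
open scoped Classical

variable {F : Type*} [Field F] [Fintype F]

lemma finite_low (D : ℕ) : {f : F[X] | f.Monic ∧ Irreducible f ∧ f.natDegree ≤ D}.Finite := by
  have : Finite (degreeLT F (D+1)) := Finite.of_equiv _ (degreeLTEquiv F (D+1)).toEquiv.symm
  refine Set.Finite.subset (Set.toFinite (degreeLT F (D+1) : Set F[X])) ?_
  rintro f ⟨h1, h2, h3⟩
  simp only [SetLike.mem_coe, mem_degreeLT]
  rw [degree_eq_natDegree h1.ne_zero]
  norm_cast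
  omega

noncomputable def low (D : ℕ) : Finset F[X] := (finite_low (F := F) D).toFinset

lemma mem_low (D : ℕ) (f : F[X]) : f ∈ low D ↔ f.Monic ∧ Irreducible f ∧ f.natDegree ≤ D := by
  simp [low]

lemma card_low (D d : ℕ) : ((low D : Finset F[X]).filter (fun f => f.natDegree = d)).card ≤
    Fintype.card F ^ d := by
  have : Finite (degreeLT F d) := Finite.of_equiv _ (degreeLTEquiv F d).toEquiv.symm
  have e := Nat.card_congr (monicEquivDegreeLT (R := F) d)
  rw [card_degreeLT] at e
  rw [← e]
  have : Finite { p : F[X] // p.Monic ∧ p.natDegree = d } :=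
    Finite.of_equiv _ (monicEquivDegreeLT (R := F) d).symm
  rw [← Nat.card_eq_finsetCard]
  refine Nat.card_le_card_of_injective
    (fun x => ⟨x.1, ?_, ?_⟩) ?_
  · have h := (Finset.mem_filter.1 x.2).1
    exact ((mem_low D _).1 h).1
  · exact (Finset.mem_filter.1 x.2).2
  · intro x y h
    have h' := congrArg Subtype.val h
    exact Subtype.ext h'

lemma sum_low (D : ℕ) : ∑ f ∈ (low D : Finset F[X]), ((Fintype.card F : ℝ) ^ f.natDegree)⁻¹ ≤
    D + 1 := by
  have hq : 0 < (Fintype.card F : ℝ) := by exact_mod_cast Fintype.card_pos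
  rw [← Finset.sum_fiberwise_of_maps_to (s := (low D : Finset F[X])) (t := Finset.range (D+1))
    (g := fun f => f.natDegree)]
  · calc _ ≤ ∑ d ∈ Finset.range (D+1), (1:ℝ) := by
          refine Finset.sum_le_sum fun d _ => ?_
          calc _ = ∑ f ∈ (low D : Finset F[X]).filter (fun f => f.natDegree = d),
                ((Fintype.card F : ℝ) ^ d)⁻¹ := by
                  refine Finset.sum_congr rfl fun f hf => ?_
                  rw [(Finset.mem_filter.1 hf).2]
            _ = ((low D : Finset F[X]).filter (fun f => f.natDegree = d)).card *
                  ((Fintype.card F : ℝ) ^ d)⁻¹ := by simp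
            _ ≤ (Fintype.card F : ℝ) ^ d * ((Fintype.card F : ℝ) ^ d)⁻¹ := by
                  gcongr
                  exact_mod_cast card_low D d
            _ = 1 := mul_inv_cancel₀ (by positivity)
      _ = _ := by simp
  · intro f hf
    rw [mem_low] at hf
    simp; omega

lemma boxes_le (D n : ℕ) {μ : F[X] →₀ Multiset ℕ} (hμ : IsXn F n μ) :
    D * boxes μ ≤ D * (∑ f ∈ low D, (μ f).sum) + n := by
  obtain ⟨h1, h2, h3⟩ := hμ
  unfold boxes
  rw [← Finset.sum_filter_add_sum_filter_not μ.support (fun f => f.natDegree ≤ D), mul_add]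
  refine Nat.add_le_add ?_ ?_
  · refine Nat.mul_le_mul_left _ (Finset.sum_le_sum_of_subset ?_)
    intro f hf
    rw [Finset.mem_filter] at hf
    rw [mem_low]
    exact ⟨(h1 f hf.1).1, (h1 f hf.1).2.1, hf.2⟩
  · rw [← h3, Finset.mul_sum, Finsupp.sum]
    refine (Finset.sum_le_sum (g := fun f => (μ f).sum * f.natDegree) ?_).trans
      (Finset.sum_le_sum_of_subset (Finset.filter_subset _ _))
    intro f hf
    rw [Finset.mem_filter] at hf
    rw [mul_comm]
    refine Nat.mul_le_mul_left _ (by omega)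

lemma sum_expand (n : ℕ) {lam : Multiset ℕ} (hpos : ∀ m ∈ lam, 0 < m) (hn : lam.sum ≤ n) :
    lam.sum ≤ ∑ i ∈ Finset.range n, ∑ j ∈ Finset.range n,
      (i+1) * (if j + 1 ≤ lam.count (i+1) then 1 else 0) := by
  rw [Finset.sum_multiset_count]
  have hsub : lam.toFinset ⊆ (Finset.range n).image (· + 1) := by
    intro m hm
    rw [Multiset.mem_toFinset] at hm
    have h1 := hpos m hm
    have h2 := (Multiset.single_le_sum (fun _ _ => Nat.zero_le _) m hm).trans hn
    rw [Finset.mem_image]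
    exact ⟨m - 1, by rw [Finset.mem_range]; omega, by omega⟩
  refine (Finset.sum_le_sum_of_subset hsub).trans ?_
  rw [Finset.sum_image (by simp)]
  refine Finset.sum_le_sum fun i _ => ?_
  rw [← Finset.mul_sum, smul_eq_mul, mul_comm, ← Finset.card_filter]
  refine Nat.mul_le_mul_left _ ?_
  have hc : lam.count (i+1) ≤ n :=
    (Multiset.count_le_card _ _).trans ((card_le_sum lam hpos).trans hn)
  calc lam.count (i+1) = (Finset.range (lam.count (i+1))).card := by simp
    _ ≤ _ := by
      apply Finset.card_le_card
      intro j hj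
      rw [Finset.mem_range] at hj
      simp only [Finset.mem_filter, Finset.mem_range]
      omega

lemma geom_bound (r : ℝ) (h0 : 0 ≤ r) (h1 : r < 1) (n : ℕ) :
    ∑ i ∈ Finset.range n, r ^ i ≤ (1 - r)⁻¹ := by
  rw [← tsum_geometric_of_lt_one h0 h1]
  exact (summable_geometric_of_lt_one h0 h1).sum_le_tsum _ (fun i _ => pow_nonneg h0 i)

lemma sum_over_mu (n : ℕ) (hq : 3 ≤ Fintype.card F) (hfin : {μ | IsXn F n μ}.Finite) (f : F[X])
    (hf : Irreducible f) :
    ∑ μ ∈ hfin.toFinset, (((μ f).sum : ℕ) : ℝ) ≤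
      (9/2) * Fintype.card F * {μ | IsXn F n μ}.ncard * ((Fintype.card F : ℝ) ^ f.natDegree)⁻¹ := by
  set q := Fintype.card F with hqdef
  have hq0 : 0 < (q:ℝ) := by exact_mod_cast (by omega : 0 < q)
  have hq3 : (3:ℝ) ≤ q := by exact_mod_cast hq
  set A := {μ | IsXn F n μ}.ncard with hA
  have hd := hf.natDegree_pos
  have step1 : ∑ μ ∈ hfin.toFinset, (μ f).sum ≤ ∑ i ∈ Finset.range n, ∑ j ∈ Finset.range n,
      (i+1) * {μ | IsXn F n μ ∧ j + 1 ≤ (μ f).count (i+1)}.ncard := by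
    calc _ ≤ ∑ μ ∈ hfin.toFinset, ∑ i ∈ Finset.range n, ∑ j ∈ Finset.range n,
          (i+1) * (if j + 1 ≤ (μ f).count (i+1) then 1 else 0) := by
          refine Finset.sum_le_sum fun μ hμ => ?_
          have hμ : IsXn F n μ := by simpa using hμ
          refine sum_expand n (hμ.2.1 f) ?_
          by_cases h0 : f ∈ μ.support
          · rw [← hμ.2.2]
            refine le_trans ?_ (Finset.single_le_sum (f := fun f => (μ f).sum * f.natDegree)
              (fun _ _ => Nat.zero_le _) h0)
            exact Nat.le_mul_of_pos_right _ hd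
          · rw [Finsupp.notMem_support_iff.1 h0]; simp
      _ = _ := by
          rw [Finset.sum_comm]
          refine Finset.sum_congr rfl fun i _ => ?_
          rw [Finset.sum_comm]
          refine Finset.sum_congr rfl fun j _ => ?_
          rw [← Finset.mul_sum, ← Finset.card_filter]
          congr 1
          rw [← Set.ncard_coe_finset]
          congr 1
          ext μ
          simp
  have step2 : ∀ i j : ℕ, ((i:ℝ)+1) * ({μ | IsXn F n μ ∧ j + 1 ≤ (μ f).count (i+1)}.ncard : ℝ) ≤
      (q * A * ((q : ℝ) ^ f.natDegree)⁻¹) * ((2/3 : ℝ) ^ i * (1/3 : ℝ) ^ j) := by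
    intro i j
    have h := card_count_ge n (i+1) (j+1) (by omega) (by omega) f hf hfin
    set B := {μ | IsXn F n μ ∧ j + 1 ≤ (μ f).count (i+1)}.ncard
    have h' : (B:ℝ) * (q:ℝ) ^ ((i+1)*(j+1)*f.natDegree) ≤ q * A := by exact_mod_cast h
    have hexp : f.natDegree + (i + j) ≤ (i+1)*(j+1)*f.natDegree := by
      nlinarith [Nat.zero_le (i*j*f.natDegree), Nat.mul_le_mul_left i hd, Nat.mul_le_mul_left j hd]
    have hpow : (q:ℝ) ^ f.natDegree * (3:ℝ)^(i+j) ≤ (q:ℝ) ^ ((i+1)*(j+1)*f.natDegree) := by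
      calc _ ≤ (q:ℝ) ^ f.natDegree * (q:ℝ)^(i+j) := by gcongr
        _ = (q:ℝ) ^ (f.natDegree + (i+j)) := by rw [pow_add _ f.natDegree]
        _ ≤ _ := pow_le_pow_right₀ (by linarith) hexp
    have hi2 : ((i:ℝ)+1) ≤ 2 ^ i := by exact_mod_cast Nat.lt_two_pow_self (n := i)
    have hB : (B:ℝ) * ((q:ℝ) ^ f.natDegree * (3:ℝ)^(i+j)) ≤ q * A :=
      (mul_le_mul_of_nonneg_left hpow (by positivity)).trans h'
    have hB' : (B:ℝ) ≤ q * A * ((q : ℝ) ^ f.natDegree)⁻¹ * ((3:ℝ)^(i+j))⁻¹ := by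
      rw [mul_assoc, ← mul_inv, ← div_eq_mul_inv, le_div_iff₀ (by positivity)]
      exact hB
    calc _ ≤ (2:ℝ)^i * (q * A * ((q : ℝ) ^ f.natDegree)⁻¹ * ((3:ℝ)^(i+j))⁻¹) := by gcongr
      _ = _ := by
        rw [div_pow, div_pow, pow_add, one_pow]
        field_simp
  have step3 : ∑ i ∈ Finset.range n, ∑ j ∈ Finset.range n,
      ((q * A * ((q : ℝ) ^ f.natDegree)⁻¹) * ((2/3 : ℝ) ^ i * (1/3 : ℝ) ^ j)) ≤
      (q * A * ((q : ℝ) ^ f.natDegree)⁻¹) * (9/2) := by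
    simp_rw [← Finset.mul_sum]
    rw [← Finset.sum_mul]
    have g1 := geom_bound (2/3) (by norm_num) (by norm_num) n
    have g2 := geom_bound (1/3) (by norm_num) (by norm_num) n
    refine mul_le_mul_of_nonneg_left ?_ (by positivity)
    calc _ ≤ (1 - 2/3 : ℝ)⁻¹ * (1 - 1/3 : ℝ)⁻¹ :=
          mul_le_mul g1 g2 (Finset.sum_nonneg fun _ _ => by positivity) (by norm_num)
      _ = 9/2 := by norm_num
  have step1' : ∑ μ ∈ hfin.toFinset, (((μ f).sum : ℕ) : ℝ) ≤
      ∑ i ∈ Finset.range n, ∑ j ∈ Finset.range n,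
      ((i:ℝ)+1) * ({μ | IsXn F n μ ∧ j + 1 ≤ (μ f).count (i+1)}.ncard : ℝ) := by
    exact_mod_cast step1
  refine step1'.trans ((Finset.sum_le_sum fun i _ => Finset.sum_le_sum fun j _ => step2 i j).trans
    (step3.trans (le_of_eq ?_)))
  ring

lemma sum_boxes (n D : ℕ) (hq : 3 ≤ Fintype.card F) (hfin : {μ | IsXn F n μ}.Finite) :
    (D:ℝ) * ∑ μ ∈ hfin.toFinset, (boxes μ : ℝ) ≤
      ((9/2) * Fintype.card F * D * (D+1) + n) * {μ | IsXn F n μ}.ncard := by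
  set A := {μ | IsXn F n μ}.ncard with hA
  have hcard : (hfin.toFinset.card) = A := (Set.ncard_eq_toFinset_card _ hfin).symm
  calc _ = ∑ μ ∈ hfin.toFinset, ((D * boxes μ : ℕ) : ℝ) := by
        rw [Finset.mul_sum]; push_cast; rfl
    _ ≤ ∑ μ ∈ hfin.toFinset, ((D * (∑ f ∈ low D, (μ f).sum) + n : ℕ) : ℝ) := by
        refine Finset.sum_le_sum fun μ hμ => ?_
        exact_mod_cast boxes_le D n (by simpa using hμ)
    _ = D * (∑ f ∈ low D, ∑ μ ∈ hfin.toFinset, (((μ f).sum : ℕ) : ℝ)) + A * n := by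
        push_cast
        rw [Finset.sum_add_distrib, ← Finset.mul_sum, Finset.sum_comm]
        simp [hcard]
    _ ≤ D * (∑ f ∈ (low D : Finset F[X]), (9/2) * Fintype.card F * A *
          ((Fintype.card F : ℝ) ^ f.natDegree)⁻¹) + A * n := by
        gcongr with f hf
        exact sum_over_mu n hq hfin f ((mem_low D f).1 hf).2.1
    _ = D * ((9/2) * Fintype.card F * A * ∑ f ∈ (low D : Finset F[X]),
          ((Fintype.card F : ℝ) ^ f.natDegree)⁻¹) + A * n := by
        rw [← Finset.mul_sum]
    _ ≤ D * ((9/2) * Fintype.card F * A * (D + 1)) + A * n := by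
        gcongr
        exact sum_low D
    _ = _ := by ring

end expectation

lemma val_desc_le (n k : ℕ) :
    padicValNat 2 (Nat.descFactorial n k) ≤ k * (Nat.log 2 n + 1) := by
  refine (padicValNat_le_nat_log _).trans ?_
  have h1 : Nat.descFactorial n k ≤ 2 ^ (k * (Nat.log 2 n + 1)) := by
    refine (Nat.descFactorial_le_pow n k).trans ?_
    rw [mul_comm, pow_mul]
    exact Nat.pow_le_pow_left (Nat.lt_pow_succ_log_self (by norm_num) n).le k
  calc _ ≤ Nat.log 2 (2 ^ (k * (Nat.log 2 n + 1))) := Nat.log_mono_right h1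
    _ = _ := Nat.log_pow (by norm_num) _

lemma log_small (a b ε : ℝ) (hε : 0 < ε) :
    ∀ᶠ n : ℕ in Filter.atTop, a + b * (Nat.log 2 n : ℝ) < ε * Nat.sqrt n := by
  have h1 : Filter.Tendsto (fun n : ℕ => ((n:ℝ)) ^ (1/2 : ℝ)) Filter.atTop Filter.atTop :=
    (tendsto_rpow_atTop (by norm_num)).comp tendsto_natCast_atTop_atTop
  have hc : 0 < ε * Real.log 2 / (4 * (|b| + 1)) := by
    have := Real.log_pos (by norm_num : (1:ℝ) < 2)
    positivity
  have h2 := ((isLittleO_log_rpow_atTop (r := 1/2) (by norm_num)).comp_tendsto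
    tendsto_natCast_atTop_atTop (k := (fun n : ℕ => (n:ℝ)))).def hc
  have h3 := h1.eventually_gt_atTop ((|a| + ε) * 4 / ε)
  filter_upwards [h2, h3, Filter.eventually_ge_atTop 1] with n h2 h3 hn
  simp only [Function.comp] at h2
  have hn1 : (1:ℝ) ≤ n := by exact_mod_cast hn
  set s := (n:ℝ) ^ (1/2 : ℝ) with hs
  have hs0 : 0 ≤ s := by positivity
  rw [Real.norm_of_nonneg (Real.log_nonneg hn1), Real.norm_of_nonneg hs0] at h2
  have hl2 := Real.log_pos (by norm_num : (1:ℝ) < 2)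
  have hlog : (Nat.log 2 n : ℝ) * Real.log 2 ≤ Real.log n := by
    rw [← Real.log_pow]
    apply Real.log_le_log (by positivity)
    exact_mod_cast Nat.pow_log_le_self 2 (by omega)
  have hsq : s ≤ Nat.sqrt n + 1 := by
    rw [hs, ← Real.sqrt_eq_rpow]
    exact Real.real_sqrt_le_nat_sqrt_succ
  have h4 : (Nat.log 2 n : ℝ) ≤ ε / (4 * (|b| + 1)) * s := by
    refine le_of_mul_le_mul_right (hlog.trans (h2.trans (le_of_eq ?_))) hl2
    ring
  have h5 : b * (Nat.log 2 n : ℝ) ≤ ε / 4 * s := by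
    calc _ ≤ (|b| + 1) * (Nat.log 2 n : ℝ) := by
          gcongr
          linarith [le_abs_self b]
      _ ≤ (|b| + 1) * (ε / (4 * (|b| + 1)) * s) := by gcongr
      _ = _ := by field_simp
  rw [div_lt_iff₀ hε] at h3
  nlinarith [le_abs_self a, mul_le_mul_of_nonneg_left hsq hε.le]

end TwoAdic

theorem two_adic_proportion_of_low_valuation
    (q : ℕ) (hq : IsPrimePow q) (hodd : Odd q)
    (F : Type*) [Field F] [Fintype F] (hFq : Fintype.card F = q)
    (k : ℕ) (hk : 0 < k) :
    ∀ ε : ℝ, 0 < ε → ∃ N : ℕ, ∀ n ≥ N,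
      (Nat.card {μ : Polynomial F →₀ Multiset ℕ //
            IsXn F n μ ∧
              padicValRat 2 (dMu q n μ) < (padicValNat 2 (Nat.descFactorial n k) : ℤ)} : ℝ) /
          (Nat.card {μ : Polynomial F →₀ Multiset ℕ // IsXn F n μ} : ℝ) < ε := by
  intro ε hε
  have hq3 : 3 ≤ q := by
    have := hq.one_lt
    obtain ⟨a, rfl⟩ := hodd
    omega
  set C := padicValNat 2 (q + 1) + padicValNat 2 (q - 1) with hC
  have E1 := TwoAdic.log_small (2 * (9 * q + 1) * (C + 1)) (2 * (9 * q + 1)) ε hε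
  have E2 := TwoAdic.log_small (2 * k) (2 * k) 1 one_pos
  obtain ⟨N, hN⟩ := Filter.eventually_atTop.1 (E1.and (E2.and (Filter.eventually_ge_atTop 1)))
  refine ⟨N, fun n hn => ?_⟩
  obtain ⟨h1, h2, hn1⟩ := hN n hn
  set D := Nat.sqrt n with hD
  have hD1 : 1 ≤ D := Nat.sqrt_pos.2 hn1
  have hDD : D * D ≤ n := Nat.sqrt_le n
  by_cases hfin : {μ | IsXn F n μ}.Finite
  swap
  · have : Nat.card {μ : Polynomial F →₀ Multiset ℕ // IsXn F n μ} = 0 := by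
      have := Set.Infinite.ncard hfin
      exact this
    rw [this]; simpa using hε
  set A := {μ | IsXn F n μ}.ncard with hA
  change _ / (A : ℝ) < ε
  rcases Nat.eq_zero_or_pos A with h0 | hApos
  · rw [h0]; simpa using hε
  set Bs := {μ : Polynomial F →₀ Multiset ℕ | IsXn F n μ ∧
      padicValRat 2 (dMu q n μ) < (padicValNat 2 (Nat.descFactorial n k) : ℤ)} with hBs
  change (Bs.ncard : ℝ) / (A : ℝ) < ε
  have hBfin : Bs.Finite := hfin.subset fun μ hμ => hμ.1
  have hA0 : (0:ℝ) < A := by exact_mod_cast hApos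
  have hn0 : (0:ℝ) < n := by exact_mod_cast hn1
  rw [div_lt_iff₀ hA0]
  set L := C + Nat.log 2 (2*n) with hL
  have hL' : L = C + 1 + Nat.log 2 n := by
    rw [hL, mul_comm, Nat.log_mul_base (by norm_num) (by omega)]; ring
  have hkn : 2 * (k * (Nat.log 2 n + 1)) ≤ n := by
    have h3 : (D:ℝ) ≤ n := by exact_mod_cast Nat.sqrt_le_self n
    have : (2 * (k * (Nat.log 2 n + 1)) : ℝ) ≤ n := by nlinarith
    exact_mod_cast this
  have hbad : ∀ μ ∈ Bs, n ≤ 2 * L * TwoAdic.boxes μ := by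
    rintro μ ⟨hμ, hlt⟩
    have a1 := TwoAdic.val_dMu q n hq3 hodd μ hμ
    have a2 := TwoAdic.val_desc_le n k
    have a3 : (n:ℤ) ≤ 2 * (TwoAdic.boxes μ * (L : ℕ)) := by
      have a4 : (padicValNat 2 (Nat.descFactorial n k) : ℤ) ≤ (k * (Nat.log 2 n + 1) : ℕ) := by
        exact_mod_cast a2
      have a5 : ((2 * (k * (Nat.log 2 n + 1)) : ℕ) : ℤ) ≤ n := by exact_mod_cast hkn
      change (n:ℤ) - TwoAdic.boxes μ * (L:ℕ) ≤ _ at a1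
      rw [Nat.cast_mul] at a5
      generalize ((k * (Nat.log 2 n + 1) : ℕ) : ℤ) = M at a4 a5
      have a7 : ((2:ℕ):ℤ) = 2 := rfl
      rw [a7] at a5
      linarith
    have a6 : n ≤ 2 * (TwoAdic.boxes μ * L) := by exact_mod_cast a3
    linarith
  have hsum : (Bs.ncard : ℝ) * n ≤ 2 * L * ∑ μ ∈ hfin.toFinset, (TwoAdic.boxes μ : ℝ) := by
    rw [Set.ncard_eq_toFinset_card _ hBfin, Finset.mul_sum]
    calc (hBfin.toFinset.card : ℝ) * n = ∑ μ ∈ hBfin.toFinset, (n:ℝ) := by simp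
      _ ≤ ∑ μ ∈ hBfin.toFinset, (2 * L * TwoAdic.boxes μ : ℝ) := by
          refine Finset.sum_le_sum fun μ hμ => ?_
          exact_mod_cast hbad μ (by simpa using hμ)
      _ ≤ _ := by
          refine Finset.sum_le_sum_of_subset_of_nonneg ?_ fun _ _ _ => by positivity
          intro μ hμ
          have : μ ∈ Bs := by simpa using hμ
          simpa using this.1
  have hbox := TwoAdic.sum_boxes n D (by omega) hfin
  rw [hFq, ← hA] at hbox
  have hDD' : (D:ℝ) * (D + 1) ≤ 2 * n := by
    have : D * (D + 1) ≤ 2 * n := by nlinarith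
    exact_mod_cast this
  have hbox2 : (D:ℝ) * ∑ μ ∈ hfin.toFinset, (TwoAdic.boxes μ : ℝ) ≤ (9 * q + 1) * n * A := by
    refine hbox.trans ?_
    gcongr
    have : (9/2 : ℝ) * q * (D * (D + 1)) ≤ 9/2 * q * (2 * n) := by gcongr
    linarith
  have hDpos : (0:ℝ) < D := by exact_mod_cast hD1
  have hfinal : (Bs.ncard : ℝ) * D * n ≤ 2 * L * (9 * q + 1) * A * n := by
    calc _ = D * ((Bs.ncard : ℝ) * n) := by ring
      _ ≤ D * (2 * L * ∑ μ ∈ hfin.toFinset, (TwoAdic.boxes μ : ℝ)) := by gcongr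
      _ = 2 * L * (D * ∑ μ ∈ hfin.toFinset, (TwoAdic.boxes μ : ℝ)) := by ring
      _ ≤ 2 * L * ((9 * q + 1) * n * A) := by gcongr
      _ = _ := by ring
  have hfinal2 : (Bs.ncard : ℝ) * D ≤ 2 * L * (9 * q + 1) * A :=
    le_of_mul_le_mul_right hfinal hn0
  have hLr : 2 * (L:ℝ) * (9 * q + 1) < ε * D := by
    rw [hL']; push_cast; linarith
  refine lt_of_mul_lt_mul_right (lt_of_le_of_lt hfinal2 ?_) hDpos.le
  calc _ < ε * D * A := by gcongr
    _ = _ := by ring
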